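/- In a growth order group G (an ordered group satisfying GOG1, GOG2, and GOG3), the centraliser of every non-trivial element is Abelian; consequently any non-Abelian growth order group has trivial center. -/

import Mathlib

namespace GOG

variable {α : Type*}

/-- Centraliser of `g` with respect to an abstract multiplication. -/
def Cent (mul : α → α → α) (g : α) : Set α := {h | mul h g = mul g h}

/-- `f ≼ g`: `f` lies in the convex hull of the centraliser of `g` (or `f = 1`). -/
def Preceq (mul : α → α → α) (one : α) (le : α → α → Prop) (f g : α) : Prop :=
  f = one ∨ (g ≠ one ∧ ∃ a ∈ Cent mul g, ∃ b ∈ Cent mul g, le a f ∧ le f b)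

/-- Strict part `f ≺ g`. -/
def Prec (mul : α → α → α) (one : α) (le : α → α → Prop) (f g : α) : Prop :=
  Preceq mul one le f g ∧ ¬ Preceq mul one le g f

/-- `f ≍ g`. -/
def Asymp (mul : α → α → α) (one : α) (le : α → α → Prop) (f g : α) : Prop :=
  Preceq mul one le f g ∧ Preceq mul one le g f

/-- `g ∼ h` iff `g h⁻¹ ≺ g`. -/
def Sim (mul : α → α → α) (one : α) (inv : α → α) (le : α → α → Prop) (g h : α) : Prop :=
  Prec mul one le (mul g (inv h)) g

/-- Axiom GOG1. -/
def GOG1 (mul : α → α → α) (one : α) (lt le : α → α → Prop) : Prop :=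
  ∀ f g : α, lt one f → lt one g → le g f →
    ∀ g₀ ∈ Cent mul g, ∃ f₀ ∈ Cent mul f, le g₀ f₀

/-- Axiom GOG2: if `f > C(g)` then `f g > g f`. -/
def GOG2 (mul : α → α → α) (one : α) (lt : α → α → Prop) : Prop :=
  ∀ f g : α, lt one f → lt one g → (∀ h ∈ Cent mul g, lt h f) → lt (mul g f) (mul f g)

/-- `s` is a scaling element. -/
def Scaling (mul : α → α → α) (one : α) (inv : α → α) (lt le : α → α → Prop) (s : α) : Prop :=
  lt one s ∧ (∀ a ∈ Cent mul s, ∀ b ∈ Cent mul s, mul a b = mul b a) ∧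
    ∀ f : α, Asymp mul one le f s → ∃ g ∈ Cent mul s, g ≠ one ∧ Sim mul one inv le g f

/-- Axiom GOG3: every growth rank contains a scaling element. -/
def GOG3 (mul : α → α → α) (one : α) (inv : α → α) (lt le : α → α → Prop) : Prop :=
  ∀ g : α, g ≠ one → ∃ s : α, Scaling mul one inv lt le s ∧ Asymp mul one le s g

/-- Being a (bi-ordered) linearly ordered group, for abstract operations. -/
def IsOrderedGroup (mul : α → α → α) (one : α) (inv : α → α) (lt : α → α → Prop) : Prop :=
  (∀ a b c : α, mul (mul a b) c = mul a (mul b c)) ∧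
    (∀ a : α, mul one a = a) ∧ (∀ a : α, mul a one = a) ∧
    (∀ a : α, mul (inv a) a = one) ∧
    (∀ a : α, ¬ lt a a) ∧ (∀ a b c : α, lt a b → lt b c → lt a c) ∧
    (∀ a b : α, lt a b ∨ a = b ∨ lt b a) ∧
    (∀ f g h : α, lt g h → lt (mul f g) (mul f h) ∧ lt (mul g f) (mul h f))

/-- Growth order group: ordered group satisfying GOG1, GOG2 and GOG3. -/
def IsGrowthOrderGroup (mul : α → α → α) (one : α) (inv : α → α) (lt le : α → α → Prop) : Prop :=
  IsOrderedGroup mul one inv lt ∧ GOG1 mul one lt le ∧ GOG2 mul one lt ∧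
    GOG3 mul one inv lt le

end GOG

/-!
Let `H g` be the convex hull of the centraliser of `g`, so that `f ≼ g` means `f ∈ H g`. Convex
subgroups are nested, and by GOG1 the subgroup `H g` grows with `|g|`; hence `H` behaves like an
ultrametric valuation: `H (f * g) ≤ H f ⊔ H g`, with equality when `H f ≠ H g`.

Transitivity of `≼` comes from GOG3. If `s` is a scaling element, `c ≍ s` and `c ≼ h`, then `c` and
`h * c` both have approximations `u * c` and `w * (h * c)` in `C(s)`, with `u`, `w` negligible
with respect to `h` in the main case. Their quotient `w * h * u⁻¹` lies in `C(s)`, whose non-trivial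
elements `k` satisfy `H s ≤ H k` because `C(s)` is Abelian; and it has the same hull as `h`. So
`H s ≤ H h`. To get `H g ≤ H h` from `g ≼ h`, take `x` in `C(g)` and a scaling element `s ≍ x`, and
use this for `x ≼ g` and then for `g ≼ h`.

If now `a` and `b` commute with `g`, approximate them by `u * a` and `w * b` in `C(s)`, where
`s ≍ g` is a scaling element. These commute, so `⁅a, b⁆` is negligible with respect to `g`. But
`⁅a, b⁆` commutes with `g`, so it is trivial.
-/

namespace GOG

open scoped Pointwise commutatorElement

section OrderedGroup

variable {G : Type*} [Group G] [LinearOrder G] [MulLeftMono G] [MulRightMono G]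

theorem mabs_mul_le_sup_sq (f g : G) : |f * g|ₘ ≤ (|f|ₘ ⊔ |g|ₘ) ^ 2 := by
  rw [mabs_le', mul_inv_rev, sq]
  exact ⟨mul_le_mul' (le_sup_of_le_left (le_mabs_self f)) (le_sup_of_le_right (le_mabs_self g)),
    mul_le_mul' (le_sup_of_le_right (inv_le_mabs g)) (le_sup_of_le_left (inv_le_mabs f))⟩

theorem mem_of_mabs_le_mabs_of_ordConnected {K : Subgroup G} (hK : (K : Set G).OrdConnected)
    {x y : G} (hy : y ∈ K) (h : |x|ₘ ≤ |y|ₘ) : x ∈ K :=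
  hK.out (K.inv_mem (mabs_mem_iff.2 hy)) (mabs_mem_iff.2 hy)
    ⟨inv_le'.1 ((inv_le_mabs x).trans h), (le_mabs_self x).trans h⟩

theorem le_total_of_ordConnected {K L : Subgroup G} (hK : (K : Set G).OrdConnected)
    (hL : (L : Set G).OrdConnected) : K ≤ L ∨ L ≤ K := by
  by_contra! h
  obtain ⟨x, hxK, hxL⟩ := SetLike.not_le_iff_exists.1 h.1
  obtain ⟨y, hyL, hyK⟩ := SetLike.not_le_iff_exists.1 h.2
  rcases le_total |x|ₘ |y|ₘ with hxy | hyx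
  · exact hxL (mem_of_mabs_le_mabs_of_ordConnected hL hyL hxy)
  · exact hyK (mem_of_mabs_le_mabs_of_ordConnected hK hxK hyx)

end OrderedGroup

theorem commute_pow_right_iff {G : Type*} [Group G] [IsMulTorsionFree G] {a g : G} {n : ℕ}
    (hn : n ≠ 0) : Commute a (g ^ n) ↔ Commute a g := by
  refine ⟨fun h => ?_, fun h => h.pow_right n⟩
  have hpow : (a * g * a⁻¹) ^ n = g ^ n := by rw [conj_pow, h.eq, mul_inv_cancel_right]
  exact mul_inv_eq_iff_eq_mul.1 (pow_left_injective hn hpow)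

theorem commutatorElement_mem_of_commute_mul {G : Type*} [Group G] {S : Subgroup G}
    {a b u w : G} (ha : a ∈ Subgroup.normalizer S) (hb : b ∈ Subgroup.normalizer S)
    (hu : u ∈ S) (hw : w ∈ S) (h : Commute (u * a) (w * b)) : ⁅a, b⁆ ∈ S := by
  have hab : ⁅a, b⁆ = (a * w⁻¹ * a⁻¹) * u⁻¹ * w * (b * u * b⁻¹) := calc
    ⁅a, b⁆ = (a * w⁻¹ * a⁻¹) * u⁻¹ * ((u * a) * (w * b)) * (b * a)⁻¹ := by
      rw [commutatorElement_def]; group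
    _ = (a * w⁻¹ * a⁻¹) * u⁻¹ * ((w * b) * (u * a)) * (b * a)⁻¹ := by rw [h.eq]
    _ = (a * w⁻¹ * a⁻¹) * u⁻¹ * w * (b * u * b⁻¹) := by group
  have ha' := (Subgroup.mem_normalizer_iff.1 ha _).1 (S.inv_mem hw)
  have hb' := (Subgroup.mem_normalizer_iff.1 hb _).1 hu
  rw [hab]
  exact S.mul_mem (S.mul_mem (S.mul_mem ha' (S.inv_mem hu)) hw) hb'

variable {G : Type*} [Group G] [LinearOrder G] [MulLeftMono G] [MulRightMono G] {f g h s x : G}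

/-- The set of all `f` with `f ≼ g`, as a subgroup: the convex hull of the centraliser of `g` for
`g ≠ 1`. The convention on `≼` makes it trivial for `g = 1`, where the centraliser is `G`. -/
def centHull (g : G) : Subgroup G where
  carrier := {f | Preceq (· * ·) (1 : G) (· ≤ ·) f g}
  one_mem' := Or.inl rfl
  mul_mem' := by
    rintro f f' (rfl | ⟨hg, a, ha, b, hb, haf, hfb⟩) hf'
    · simpa using hf'
    · rcases hf' with rfl | ⟨-, a', ha', b', hb', haf', hfb'⟩
      · exact Or.inr ⟨hg, a, ha, b, hb, by simpa using haf, by simpa using hfb⟩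
      · exact Or.inr ⟨hg, a * a', Commute.mul_left ha ha', b * b', Commute.mul_left hb hb',
          mul_le_mul' haf haf', mul_le_mul' hfb hfb'⟩
  inv_mem' := by
    rintro f (rfl | ⟨hg, a, ha, b, hb, haf, hfb⟩)
    · exact Or.inl inv_one
    · exact Or.inr ⟨hg, b⁻¹, Commute.inv_left hb, a⁻¹, Commute.inv_left ha,
        inv_le_inv_iff.2 hfb, inv_le_inv_iff.2 haf⟩

theorem centHull_one : centHull (1 : G) = ⊥ :=
  (Subgroup.eq_bot_iff_forall _).2 fun _ hx => hx.resolve_right fun h => h.1 rfl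

theorem mem_centHull_iff (hg : g ≠ 1) :
    x ∈ centHull g ↔ ∃ a b, Commute a g ∧ Commute b g ∧ a ≤ x ∧ x ≤ b := by
  constructor
  · rintro (rfl | ⟨-, a, ha, b, hb, hax, hxb⟩)
    · exact ⟨1, 1, Commute.one_left g, Commute.one_left g, le_rfl, le_rfl⟩
    · exact ⟨a, b, ha, hb, hax, hxb⟩
  · rintro ⟨a, b, ha, hb, hax, hxb⟩
    exact Or.inr ⟨hg, a, ha, b, hb, hax, hxb⟩

theorem mem_centHull_of_commute (hg : g ≠ 1) (h : Commute x g) : x ∈ centHull g :=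
  (mem_centHull_iff hg).2 ⟨x, x, h, h, le_rfl, le_rfl⟩

theorem self_mem_centHull (g : G) : g ∈ centHull g := by
  rcases eq_or_ne g 1 with rfl | hg
  · exact one_mem _
  · exact mem_centHull_of_commute hg (Commute.refl g)

theorem ordConnected_centHull (g : G) : (centHull g : Set G).OrdConnected := by
  rcases eq_or_ne g 1 with rfl | hg
  · rw [centHull_one, Subgroup.coe_bot]
    exact Set.ordConnected_singleton
  · refine ⟨fun x hx y hy z hz => ?_⟩
    obtain ⟨a, -, ha, -, hax, -⟩ := (mem_centHull_iff hg).1 hx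
    obtain ⟨-, b, -, hb, -, hyb⟩ := (mem_centHull_iff hg).1 hy
    exact (mem_centHull_iff hg).2 ⟨a, b, ha, hb, hax.trans hz.1, hz.2.trans hyb⟩

theorem centHull_le_of_ordConnected {K : Subgroup G} (hK : (K : Set G).OrdConnected)
    (h : ∀ a, Commute a g → a ∈ K) : centHull g ≤ K := by
  rintro x (rfl | ⟨-, a, ha, b, hb, hax, hxb⟩)
  · exact one_mem K
  · exact hK.out (h a ha) (h b hb) ⟨hax, hxb⟩

theorem centHull_le_of_commute_imp (hf : f ≠ 1) (h : ∀ a, Commute a g → Commute a f) :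
    centHull g ≤ centHull f :=
  centHull_le_of_ordConnected (ordConnected_centHull f) fun a ha =>
    mem_centHull_of_commute hf (h a ha)

theorem centHull_le_total (f g : G) : centHull f ≤ centHull g ∨ centHull g ≤ centHull f :=
  le_total_of_ordConnected (ordConnected_centHull f) (ordConnected_centHull g)

theorem centHull_lt_of_not_le (h : ¬ centHull g ≤ centHull f) : centHull f < centHull g :=
  lt_of_le_not_ge ((centHull_le_total g f).resolve_left h) h

theorem centHull_lt_of_mem_of_notMem (hg : x ∈ centHull g) (hf : x ∉ centHull f) :
    centHull f < centHull g :=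
  centHull_lt_of_not_le fun hle => hf (hle hg)

theorem ne_one_of_centHull_lt (h : centHull f < centHull g) : g ≠ 1 := by
  rintro rfl
  rw [centHull_one] at h
  exact not_lt_bot h

theorem centHull_inv (g : G) : centHull g⁻¹ = centHull g := by
  rcases eq_or_ne g 1 with rfl | hg
  · rw [inv_one]
  · exact le_antisymm
      (centHull_le_of_commute_imp hg fun a ha => Commute.inv_right_iff.1 ha)
      (centHull_le_of_commute_imp (inv_ne_one.2 hg) fun a ha => ha.inv_right)

theorem centHull_mabs (g : G) : centHull |g|ₘ = centHull g := by
  rcases mabs_choice g with h | h <;> rw [h]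
  exact centHull_inv g

theorem centHull_pow (g : G) {n : ℕ} (hn : n ≠ 0) : centHull (g ^ n) = centHull g := by
  rcases eq_or_ne g 1 with rfl | hg
  · rw [one_pow]
  · exact le_antisymm
      (centHull_le_of_commute_imp hg fun a ha => (commute_pow_right_iff hn).1 ha)
      (centHull_le_of_commute_imp ((pow_eq_one_iff_left hn).not.2 hg) fun a ha => ha.pow_right n)

theorem conj_mem_centHull_conj (t : G) (h : x ∈ centHull g) :
    t * x * t⁻¹ ∈ centHull (t * g * t⁻¹) := by
  rcases h with rfl | ⟨hg, a, ha, b, hb, hax, hxb⟩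
  · simp [one_mem]
  · exact Or.inr ⟨by simpa using hg, t * a * t⁻¹, (Commute.conj_iff t).2 ha,
      t * b * t⁻¹, (Commute.conj_iff t).2 hb,
      mul_le_mul_left (mul_le_mul_right hax t) t⁻¹, mul_le_mul_left (mul_le_mul_right hxb t) t⁻¹⟩

theorem centHull_conj (t g : G) : centHull (t * g * t⁻¹) = MulAut.conj t • centHull g := by
  ext x
  rw [Subgroup.mem_pointwise_smul_iff_inv_smul_mem, ← map_inv, MulAut.smul_def, MulAut.conj_apply]
  constructor <;> intro hx
  · simpa [mul_assoc] using conj_mem_centHull_conj t⁻¹ hx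
  · simpa [mul_assoc] using conj_mem_centHull_conj t hx

theorem centHull_conj_lt_iff_of_commute {t : G} (ht : Commute t g) :
    centHull (t * f * t⁻¹) < centHull g ↔ centHull f < centHull g := by
  have hg : centHull g = MulAut.conj t • centHull g := by
    rw [← centHull_conj, ht.eq, mul_inv_cancel_right]
  conv_lhs => rw [hg, centHull_conj]
  simp only [lt_iff_le_not_ge, Subgroup.pointwise_smul_le_pointwise_smul_iff]

section Scaling

variable (hs : Scaling (· * ·) (1 : G) (·⁻¹) (· < ·) (· ≤ ·) s)
include hs

theorem Scaling.exists_commute_mul (hfs : f ∈ centHull s) (hsf : s ∈ centHull f) :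
    ∃ u : G, Commute (u * f) s ∧ f ∉ centHull u := by
  obtain ⟨g, hg, -, hsim⟩ := hs.2.2 f ⟨hfs, hsf⟩
  have hgu : g ∉ centHull (g * f⁻¹) := hsim.2
  refine ⟨g * f⁻¹, by rwa [inv_mul_cancel_right], fun hf => hgu ?_⟩
  simpa using mul_mem (self_mem_centHull (g * f⁻¹)) hf

theorem Scaling.centHull_le_of_commute {k : G} (hk : k ≠ 1) (hks : Commute k s) :
    centHull s ≤ centHull k :=
  centHull_le_of_commute_imp hk fun a ha => hs.2.1 a ha k hks

end Scaling

section GOG1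

variable (h1 : GOG1 (· * ·) (1 : G) (· < ·) (· ≤ ·))
include h1

theorem centHull_mono_of_one_lt (hg : 1 < g) (hgf : g ≤ f) : centHull g ≤ centHull f := by
  have hf : 1 < f := hg.trans_le hgf
  refine centHull_le_of_ordConnected (ordConnected_centHull f) fun a ha => ?_
  obtain ⟨p, hp, hap⟩ := h1 f g hf hg hgf a⁻¹ (Commute.inv_left ha)
  obtain ⟨q, hq, haq⟩ := h1 f g hf hg hgf a ha
  exact (mem_centHull_iff hf.ne').2 ⟨p⁻¹, q, Commute.inv_left hp, hq, inv_le'.1 hap, haq⟩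

theorem centHull_mono (h : |g|ₘ ≤ |f|ₘ) : centHull g ≤ centHull f := by
  rw [← centHull_mabs g, ← centHull_mabs f]
  rcases (one_le_mabs g).eq_or_lt with hg | hg
  · rw [← hg, centHull_one]
    exact bot_le
  · exact centHull_mono_of_one_lt h1 hg h

theorem centHull_mul_le_sup (f g : G) : centHull (f * g) ≤ centHull f ⊔ centHull g := by
  have hsq : centHull (f * g) ≤ centHull (|f|ₘ ⊔ |g|ₘ) := by
    rw [← centHull_pow (|f|ₘ ⊔ |g|ₘ) two_ne_zero]
    exact centHull_mono h1 ((mabs_mul_le_sup_sq f g).trans (le_mabs_self _))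
  refine hsq.trans ?_
  rw [← centHull_mabs f, ← centHull_mabs g]
  rcases max_choice |f|ₘ |g|ₘ with h | h <;> rw [h]
  exacts [le_sup_left, le_sup_right]

theorem centHull_mul_lt (hf : centHull f < centHull h) (hg : centHull g < centHull h) :
    centHull (f * g) < centHull h := by
  refine (centHull_mul_le_sup h1 f g).trans_lt ?_
  rcases centHull_le_total f g with hfg | hgf
  · rwa [sup_of_le_right hfg]
  · rwa [sup_of_le_left hgf]

theorem centHull_mul_eq_right_of_lt (h : centHull f < centHull g) :
    centHull (f * g) = centHull g := by
  have hle : centHull (f * g) ≤ centHull g :=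
    (centHull_mul_le_sup h1 f g).trans (sup_le h.le le_rfl)
  refine hle.eq_of_not_lt fun hlt => ?_
  have hlt' := centHull_mul_lt h1 ((centHull_inv f).trans_lt h) hlt
  rw [inv_mul_cancel_left] at hlt'
  exact hlt'.false

theorem centHull_mul_eq_left_of_lt (h : centHull g < centHull f) :
    centHull (f * g) = centHull f := by
  rw [← centHull_inv, mul_inv_rev, centHull_mul_eq_right_of_lt h1, centHull_inv]
  rwa [centHull_inv, centHull_inv]

/-- The subgroup of all `f` that are negligible with respect to `g`, in the sense that the convex
hull of the centraliser of `f` is strictly contained in that of `g`. Once `≼` is known to be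
transitive this is the relation `f ≺ g`. -/
def negligible (hg : g ≠ 1) : Subgroup G where
  carrier := {f | centHull f < centHull g}
  one_mem' := by
    rw [Set.mem_ofPred_eq, centHull_one, bot_lt_iff_ne_bot]
    exact fun h => hg ((Subgroup.eq_bot_iff_forall _).1 h g (self_mem_centHull g))
  mul_mem' := centHull_mul_lt h1
  inv_mem' := fun {f} hf => (centHull_inv f).trans_lt hf

theorem mem_normalizer_negligible {t : G} (hg : g ≠ 1) (ht : Commute t g) :
    t ∈ Subgroup.normalizer (negligible h1 hg) :=
  Subgroup.mem_normalizer_iff.2 fun _ => (centHull_conj_lt_iff_of_commute ht).symm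

section Scaling

variable (hs : Scaling (· * ·) (1 : G) (·⁻¹) (· < ·) (· ≤ ·) s) {c : G}
include hs

theorem Scaling.centHull_le_of_asymp (hcs : c ∈ centHull s) (hsc : s ∈ centHull c) :
    centHull s ≤ centHull c := by
  obtain ⟨u, hus, hcu⟩ := hs.exists_commute_mul hcs hsc
  have hu := centHull_lt_of_mem_of_notMem (self_mem_centHull c) hcu
  have huc : centHull (u * c) = centHull c := centHull_mul_eq_right_of_lt h1 hu
  exact huc ▸ hs.centHull_le_of_commute (ne_one_of_centHull_lt (hu.trans_eq huc.symm)) hus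

theorem Scaling.centHull_le_of_asymp_of_mem (hcs : c ∈ centHull s) (hsc : s ∈ centHull c)
    (hch : c ∈ centHull h) : centHull s ≤ centHull h := by
  by_contra hsh
  have hhs : centHull h < centHull s := centHull_lt_of_not_le hsh
  have hhc : centHull (h * c) = centHull c :=
    centHull_mul_eq_right_of_lt h1 (hhs.trans_le (hs.centHull_le_of_asymp h1 hcs hsc))
  have hh := self_mem_centHull h
  obtain ⟨u, hus, hcu⟩ := hs.exists_commute_mul hcs hsc
  obtain ⟨w, hws, hcw⟩ := hs.exists_commute_mul (mul_mem (hhs.le hh) hcs) (hhc ▸ hsc)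
  have hu : centHull u⁻¹ < centHull h :=
    (centHull_inv u).trans_lt (centHull_lt_of_mem_of_notMem hch hcu)
  have hw : centHull w < centHull h := centHull_lt_of_mem_of_notMem (mul_mem hh hch) hcw
  have hwh : centHull (w * h) = centHull h := centHull_mul_eq_right_of_lt h1 hw
  have hk : centHull (w * h * u⁻¹) = centHull h :=
    (centHull_mul_eq_left_of_lt h1 (hu.trans_eq hwh.symm)).trans hwh
  have hks : Commute (w * h * u⁻¹) s := by
    have hquot := hws.mul_left hus.inv_left
    rwa [show w * (h * c) * (u * c)⁻¹ = w * h * u⁻¹ by group] at hquot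
  exact hsh (hk ▸ hs.centHull_le_of_commute (ne_one_of_centHull_lt (hw.trans_eq hk.symm)) hks)

end Scaling

variable (h3 : GOG3 (· * ·) (1 : G) (·⁻¹) (· < ·) (· ≤ ·))
include h3

theorem centHull_le_of_mem (hgh : g ∈ centHull h) : centHull g ≤ centHull h := by
  rcases eq_or_ne g 1 with rfl | hg
  · rw [centHull_one]
    exact bot_le
  refine centHull_le_of_ordConnected (ordConnected_centHull h) fun x hxg => ?_
  rcases eq_or_ne x 1 with rfl | hx
  · exact one_mem _
  obtain ⟨s, hs, hsx, hxs⟩ : ∃ s, Scaling (· * ·) (1 : G) (·⁻¹) (· < ·) (· ≤ ·) s ∧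
    s ∈ centHull x ∧ x ∈ centHull s := h3 x hx
  have hsg : centHull s ≤ centHull g :=
    hs.centHull_le_of_asymp_of_mem h1 hxs hsx (mem_centHull_of_commute hg hxg)
  suffices centHull s ≤ centHull h from this hxs
  rcases centHull_le_total s h with hsh | hhs
  · exact hsh
  · exact hs.centHull_le_of_asymp_of_mem h1 (hhs hgh) (hsg (self_mem_centHull s)) hgh

theorem centHull_eq_of_commute (hf : f ≠ 1) (hg : g ≠ 1) (hfg : Commute f g) :
    centHull f = centHull g :=
  le_antisymm (centHull_le_of_mem h1 h3 (mem_centHull_of_commute hg hfg))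
    (centHull_le_of_mem h1 h3 (mem_centHull_of_commute hf hfg.symm))

theorem eq_one_of_mem_negligible_of_commute (hg : g ≠ 1) (hf : f ∈ negligible h1 hg)
    (hfg : Commute f g) : f = 1 := by
  by_contra hf1
  exact (centHull_eq_of_commute h1 h3 hf1 hg hfg).not_lt hf

theorem Scaling.exists_negligible_commute_mul
    (hs : Scaling (· * ·) (1 : G) (·⁻¹) (· < ·) (· ≤ ·) s) (hg : g ≠ 1)
    (hsg : s ∈ centHull g) (hgs : g ∈ centHull s) (hfg : Commute f g) :
    ∃ u ∈ negligible h1 hg, Commute (u * f) s := by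
  rcases eq_or_ne f 1 with rfl | hf
  · exact ⟨1, one_mem _, by rw [one_mul]; exact Commute.one_left s⟩
  have hfg' := centHull_eq_of_commute h1 h3 hf hg hfg
  have hfs : f ∈ centHull s :=
    centHull_le_of_mem h1 h3 hgs (mem_centHull_of_commute hg hfg)
  obtain ⟨u, hu, hfu⟩ := hs.exists_commute_mul hfs (hfg' ▸ hsg)
  exact ⟨u, centHull_lt_of_mem_of_notMem (mem_centHull_of_commute hg hfg) hfu, hu⟩

theorem commute_of_commute_of_commute (hg : g ≠ 1) {a b : G} (ha : Commute a g)
    (hb : Commute b g) : Commute a b := by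
  obtain ⟨s, hs, hsg, hgs⟩ := h3 g hg
  obtain ⟨u, hu, hus⟩ := hs.exists_negligible_commute_mul h1 h3 hg hsg hgs ha
  obtain ⟨w, hw, hws⟩ := hs.exists_negligible_commute_mul h1 h3 hg hsg hgs hb
  have hcomm : Commute (u * a) (w * b) := hs.2.1 _ hus _ hws
  have hab : ⁅a, b⁆ ∈ negligible h1 hg := commutatorElement_mem_of_commute_mul
    (mem_normalizer_negligible h1 hg ha) (mem_normalizer_negligible h1 hg hb) hu hw hcomm
  have habg : Commute ⁅a, b⁆ g := ((ha.mul_left hb).mul_left ha.inv_left).mul_left hb.inv_left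
  exact commutatorElement_eq_one_iff_commute.1
    (eq_one_of_mem_negligible_of_commute h1 h3 hg hab habg)

end GOG1

end GOG

theorem stmt_12_general {G : Type*} [Group G] [LinearOrder G]
    [CovariantClass G G (· * ·) (· < ·)]
    [CovariantClass G G (Function.swap (· * ·)) (· < ·)]
    (h1 : GOG.GOG1 (· * ·) (1 : G) (· < ·) (· ≤ ·))
    (h3 : GOG.GOG3 (· * ·) (1 : G) (·⁻¹) (· < ·) (· ≤ ·)) :
    (∀ g : G, g ≠ 1 → ∀ a ∈ GOG.Cent (· * ·) g, ∀ b ∈ GOG.Cent (· * ·) g,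
      a * b = b * a) ∧
    ((∃ a b : G, a * b ≠ b * a) → ∀ z : G, (∀ y : G, z * y = y * z) → z = 1) := by
  have : MulLeftStrictMono G := ⟨fun a _ _ hbc => CovariantClass.elim (μ := (· * ·)) a hbc⟩
  have : MulRightStrictMono G :=
    ⟨fun a _ _ hbc => CovariantClass.elim (μ := Function.swap (· * ·)) a hbc⟩
  have := mulLeftMono_of_mulLeftStrictMono G
  have := mulRightMono_of_mulRightStrictMono G
  refine ⟨fun g hg a ha b hb => GOG.commute_of_commute_of_commute h1 h3 hg ha hb, ?_⟩
  rintro ⟨a, b, hab⟩ z hz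
  by_contra hz1
  exact hab (GOG.commute_of_commute_of_commute h1 h3 hz1 (hz a).symm (hz b).symm)

theorem stmt_12 {G : Type*} [Group G] [LinearOrder G]
    [CovariantClass G G (· * ·) (· < ·)]
    [CovariantClass G G (Function.swap (· * ·)) (· < ·)]
    (h1 : GOG.GOG1 (· * ·) (1 : G) (· < ·) (· ≤ ·))
    (h2 : GOG.GOG2 (· * ·) (1 : G) (· < ·))
    (h3 : GOG.GOG3 (· * ·) (1 : G) (·⁻¹) (· < ·) (· ≤ ·)) :
    (∀ g : G, g ≠ 1 → ∀ a ∈ GOG.Cent (· * ·) g, ∀ b ∈ GOG.Cent (· * ·) g,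
      a * b = b * a) ∧
    ((∃ a b : G, a * b ≠ b * a) → ∀ z : G, (∀ y : G, z * y = y * z) → z = 1) :=
  stmt_12_general h1 h3
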